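/- For all positive integers x, y, m, n with x > y, if φ(x^m − y^m) = x^n − y^n, then m = 1, n = 1 and x = y + 1. -/

import Mathlib

/-!
If `m < n` then `φ(x ^ m - y ^ m) < x ^ n - y ^ n`, and if `m = n` then `φ(N) = N` forces `N = 1`.
The substance is that `φ(x ^ m - y ^ m)` never divides `x ^ n - y ^ n` when `n < m`. Common factors
of `x, y` and of `m, n` can be removed, so let both pairs be coprime, put `N = x ^ m - y ^ m`, and
suppose `φ(N) ∣ x ^ n - y ^ n`. Then `x * φ(N) < N`.

As `φ(N)` is even, `x` and `y` are odd, and a 2-adic descent shows that `m` is odd. A prime divisor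
of `N` either divides `x - y` or is `1` modulo some prime `q ∣ m`. The former contribute at most
`2 / 3 * log x` to `log (N / φ(N))`. If there are `K` of the latter for a given `q`, then
`q ^ K ∣ φ(N)`, and lifting the exponent turns this into `q ^ K ∣ x ^ (q - 1) - y ^ (q - 1)`. As
`q - 1` is even, the right side factors, whence `q ^ (2 * K) ≤ x ^ (q - 1)`. Zsigmondy's theorem
gives `2 ^ ω(m) ≤ 2 * K`, so these bounds make the contribution of `q` at most
`log x / (3 * ω(m))`. In total `log (N / φ(N)) ≤ log x`, contradicting `x * φ(N) < N`.
-/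

section PowSubPow

variable {p q x y m d : ℕ}

lemma coprime_pow_sub_pow_right (hxy : x.Coprime y) (hyx : y ≤ x) (hm : m ≠ 0) :
    (x ^ m - y ^ m).Coprime y :=
  ((Nat.coprime_sub_self_left (Nat.pow_le_pow_left hyx m)).mpr
    (hxy.pow m m)).coprime_dvd_right (dvd_pow_self y hm)

lemma coprime_pow_sub_pow_left (hxy : x.Coprime y) (hyx : y ≤ x) (hm : m ≠ 0) :
    (x ^ m - y ^ m).Coprime x :=
  ((Nat.coprime_self_sub_left (Nat.pow_le_pow_left hyx m)).mpr
    (hxy.symm.pow m m)).coprime_dvd_right (dvd_pow_self x hm)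

lemma not_dvd_of_prime_dvd_pow_sub_pow (hp : p.Prime) (hxy : x.Coprime y) (hyx : y ≤ x)
    (hm : m ≠ 0) (h : p ∣ x ^ m - y ^ m) : ¬p ∣ x ∧ ¬p ∣ y :=
  ⟨hp.coprime_iff_not_dvd.mp ((coprime_pow_sub_pow_left hxy hyx hm).coprime_dvd_left h),
    hp.coprime_iff_not_dvd.mp ((coprime_pow_sub_pow_right hxy hyx hm).coprime_dvd_left h)⟩

lemma prime_dvd_pow_sub_one_sub_pow_sub_one (hp : p.Prime) (hyx : y ≤ x) (hpx : ¬p ∣ x)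
    (hpy : ¬p ∣ y) : p ∣ x ^ (p - 1) - y ^ (p - 1) := by
  have hfermat {a : ℕ} (ha : ¬p ∣ a) : a ^ (p - 1) ≡ 1 [MOD p] := by
    rw [← Nat.totient_prime hp]
    exact Nat.ModEq.pow_totient ((hp.coprime_iff_not_dvd.mpr ha).symm)
  exact (Nat.modEq_iff_dvd' (Nat.pow_le_pow_left hyx _)).mp ((hfermat hpy).trans (hfermat hpx).symm)

lemma prime_pow_dvd_sub_of_dvd_pow_sub_pow {k n : ℕ} (hq : q.Prime) (hyx : y ≤ x)
    (hqx : ¬q ∣ x) (hqn : ¬q ∣ n) (hqxy : q ∣ x - y) (h : q ^ k ∣ x ^ n - y ^ n) :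
    q ^ k ∣ x - y := by
  zify [hyx, Nat.pow_le_pow_left hyx n] at hqx hqn hqxy h ⊢
  rw [pow_dvd_iff_le_emultiplicity] at h ⊢
  rwa [emultiplicity_pow_sub_pow_of_prime (Nat.prime_iff_prime_int.mp hq) hqxy hqx hqn] at h

/-- `p` is a prime whose rank of apparition in the sequence `k ↦ x ^ k - y ^ k` is `d`: a primitive
prime divisor of `x ^ d - y ^ d`. The subtraction is truncated, so this is meant for `y ≤ x`. -/
def IsPrimitivePrime (x y d p : ℕ) : Prop :=
  p.Prime ∧ ∀ k, p ∣ x ^ k - y ^ k ↔ d ∣ k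

lemma isPrimitivePrime_orderOf [Fact p.Prime] (hyx : y ≤ x) (hpy : ¬p ∣ y) :
    IsPrimitivePrime x y (orderOf (x / y : ZMod p)) p := by
  have hy0 : (y : ZMod p) ≠ 0 := by rwa [Ne, ZMod.natCast_eq_zero_iff]
  refine ⟨Fact.out, fun k ↦ ?_⟩
  rw [← ZMod.natCast_eq_zero_iff, Nat.cast_sub (Nat.pow_le_pow_left hyx k), sub_eq_zero,
    orderOf_dvd_iff_pow_eq_one, div_pow, div_eq_one_iff_eq (pow_ne_zero _ hy0), Nat.cast_pow,
    Nat.cast_pow]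

namespace IsPrimitivePrime

lemma dvd_pow_sub_pow (h : IsPrimitivePrime x y d p) : p ∣ x ^ d - y ^ d :=
  (h.2 d).mpr dvd_rfl

lemma unique {e : ℕ} (hd : IsPrimitivePrime x y d p) (he : IsPrimitivePrime x y e p) : d = e :=
  Nat.dvd_antisymm ((hd.2 e).mp he.dvd_pow_sub_pow) ((he.2 d).mp hd.dvd_pow_sub_pow)

lemma dvd_sub_one (h : IsPrimitivePrime x y d p) (hxy : x.Coprime y) (hyx : y ≤ x) (hd : d ≠ 0) :
    d ∣ p - 1 := by
  obtain ⟨hpx, hpy⟩ := not_dvd_of_prime_dvd_pow_sub_pow h.1 hxy hyx hd h.dvd_pow_sub_pow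
  exact (h.2 _).mp (prime_dvd_pow_sub_one_sub_pow_sub_one h.1 hyx hpx hpy)

end IsPrimitivePrime

end PowSubPow

section CyclotomicForm

open Polynomial

/-- The homogenized cyclotomic polynomial `Φ_d(x, y) = y ^ φ(d) * Φ_d(x / y)`, written through
`Polynomial.scaleRoots` so that it makes sense over any commutative ring. -/
noncomputable def cyclotomicForm {R : Type*} [CommRing R] (d : ℕ) (x y : R) : R :=
  ((cyclotomic d R).scaleRoots y).eval x

lemma map_cyclotomicForm {R S : Type*} [CommRing R] [CommRing S] [Nontrivial S] (f : R →+* S)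
    (d : ℕ) (x y : R) : f (cyclotomicForm d x y) = cyclotomicForm d (f x) (f y) := by
  have hlead : f (cyclotomic d R).leadingCoeff ≠ 0 := by simp [(cyclotomic.monic d R).leadingCoeff]
  rw [cyclotomicForm, cyclotomicForm, ← map_cyclotomic d f, ← map_scaleRoots _ _ _ hlead, eval_map,
    eval₂_at_apply]

lemma cyclotomicForm_eq_pow_mul_eval_div {K : Type*} [Field K] (d : ℕ) (x : K) {y : K}
    (hy : y ≠ 0) : cyclotomicForm d x y = y ^ d.totient * (cyclotomic d K).eval (x / y) := by
  rw [← natDegree_cyclotomic d K, ← scaleRoots_eval_mul, mul_div_cancel₀ _ hy, cyclotomicForm]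

lemma eval_scaleRoots_X_pow_sub_one {R : Type*} [CommRing R] [Nontrivial R] {n : ℕ} (hn : n ≠ 0)
    (x y : R) : ((X ^ n - 1 : R[X]).scaleRoots y).eval x = x ^ n - y ^ n := by
  have hscale : (X ^ n - 1 : R[X]).scaleRoots y = X ^ n - C (y ^ n) := by
    ext i
    rw [coeff_scaleRoots, ← C_1, natDegree_X_pow_sub_C, coeff_sub, coeff_sub, coeff_X_pow, coeff_C,
      coeff_C]
    split_ifs <;> simp_all
  simp [hscale]

lemma cyclotomicForm_dvd_pow_sub_pow {R : Type*} [CommRing R] [IsDomain R] {d : ℕ} (hd : d ≠ 0)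
    (x y : R) : cyclotomicForm d x y ∣ x ^ d - y ^ d := by
  rw [← eval_scaleRoots_X_pow_sub_one hd]
  exact eval_dvd (scaleRoots_dvd _ _ (cyclotomic.dvd_X_pow_sub_one d R))

lemma pow_sub_pow_mul_cyclotomicForm_dvd {R : Type*} [CommRing R] [IsDomain R] {d t : ℕ}
    (ht : t ∈ d.properDivisors) (x y : R) :
    (x ^ t - y ^ t) * cyclotomicForm d x y ∣ x ^ d - y ^ d := by
  have ht0 : t ≠ 0 := (Nat.pos_of_mem_properDivisors ht).ne'
  have hd0 : d ≠ 0 := (Nat.mem_properDivisors.mp ht).2.ne_bot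
  rw [← eval_scaleRoots_X_pow_sub_one ht0, ← eval_scaleRoots_X_pow_sub_one hd0, cyclotomicForm,
    ← eval_mul, ← mul_scaleRoots_of_noZeroDivisors]
  exact eval_dvd (scaleRoots_dvd _ _ (X_pow_sub_one_mul_cyclotomic_dvd_X_pow_sub_one_of_dvd R ht))

lemma sub_pow_totient_le_cyclotomicForm (d : ℕ) {x y : ℝ} (hy : 0 < y) (hyx : y < x) :
    (x - y) ^ d.totient ≤ cyclotomicForm d x y := by
  calc (x - y) ^ d.totient = y ^ d.totient * (x / y - 1) ^ d.totient := by
        rw [← mul_pow, mul_sub, mul_div_cancel₀ _ hy.ne', mul_one]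
    _ ≤ y ^ d.totient * (cyclotomic d ℝ).eval (x / y) := by
        gcongr
        exact sub_one_pow_totient_le_cyclotomic_eval ((one_lt_div hy).mpr hyx) d
    _ = cyclotomicForm d x y := (cyclotomicForm_eq_pow_mul_eval_div d x hy.ne').symm

variable {p x y d : ℕ}

lemma not_dvd_of_dvd_cyclotomicForm (hp : p.Prime) (hxy : x.Coprime y) (hyx : y ≤ x) (hd : d ≠ 0)
    (h : (p : ℤ) ∣ cyclotomicForm d (x : ℤ) y) : ¬p ∣ y := by
  have hpN : p ∣ x ^ d - y ^ d := by
    zify [Nat.pow_le_pow_left hyx d]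
    exact h.trans (cyclotomicForm_dvd_pow_sub_pow hd _ _)
  exact (not_dvd_of_prime_dvd_pow_sub_pow hp hxy hyx hd hpN).2

lemma exists_isPrimitivePrime_of_dvd_cyclotomicForm (hp : p.Prime) (hyx : y ≤ x) (hpy : ¬p ∣ y)
    (hd : d ≠ 0) (h : (p : ℤ) ∣ cyclotomicForm d (x : ℤ) y) :
    ∃ k e, d = p ^ k * e ∧ IsPrimitivePrime x y e p := by
  have := Fact.mk hp
  have hy0 : (y : ZMod p) ≠ 0 := by rwa [Ne, ZMod.natCast_eq_zero_iff]
  have hroot : (cyclotomic d (ZMod p)).IsRoot (x / y : ZMod p) := by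
    rw [← ZMod.intCast_zmod_eq_zero_iff_dvd, ← eq_intCast (Int.castRingHom (ZMod p)),
      map_cyclotomicForm, map_natCast, map_natCast, cyclotomicForm_eq_pow_mul_eval_div d _ hy0] at h
    exact (mul_eq_zero.mp h).resolve_left (pow_ne_zero _ hy0)
  obtain ⟨k, e, hpe, rfl⟩ := Nat.exists_eq_pow_mul_and_not_dvd hd p hp.ne_one
  have : NeZero (e : ZMod p) := ⟨by rwa [Ne, ZMod.natCast_eq_zero_iff]⟩
  refine ⟨k, e, rfl, ?_⟩
  rw [(isRoot_cyclotomic_prime_pow_mul_iff_of_charP.mp hroot).eq_orderOf]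
  exact isPrimitivePrime_orderOf hyx hpy

lemma dvd_and_dvd_of_not_isPrimitivePrime (hp : p.Prime) (hxy : x.Coprime y) (hyx : y ≤ x)
    (hd : d ≠ 0) (h : (p : ℤ) ∣ cyclotomicForm d (x : ℤ) y) (hprim : ¬IsPrimitivePrime x y d p) :
    p ∣ d ∧ p ∣ x ^ (d / p) - y ^ (d / p) ∧ ∀ r, r.Prime → r ∣ d → r ≤ p := by
  have hpy := not_dvd_of_dvd_cyclotomicForm hp hxy hyx hd h
  obtain ⟨_ | k, e, rfl, he⟩ := exists_isPrimitivePrime_of_dvd_cyclotomicForm hp hyx hpy hd h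
  · simp [he] at hprim
  have he0 : e ≠ 0 := right_ne_zero_of_mul hd
  have hdiv : p ^ (k + 1) * e / p = p ^ k * e := by
    rw [pow_succ', mul_assoc, Nat.mul_div_cancel_left _ hp.pos]
  refine ⟨(dvd_pow_self p k.succ_ne_zero).mul_right e, ?_, fun r hr hrd ↦ ?_⟩
  · exact (he.2 _).mpr (hdiv ▸ dvd_mul_left e _)
  · rcases hr.dvd_mul.mp hrd with hrp | hre
    · exact ((Nat.prime_dvd_prime_iff_eq hr hp).mp (hr.dvd_of_dvd_pow hrp)).le
    · have := Nat.le_of_dvd (Nat.sub_pos_of_lt hp.one_lt)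
        (hre.trans (he.dvd_sub_one hxy hyx he0))
      omega

lemma not_sq_dvd_cyclotomicForm (hp : p.Prime) (hpodd : Odd p) (hxy : x.Coprime y) (hyx : y < x)
    (hd : d ≠ 0) (hpd : p ∣ d) (h : p ∣ x ^ (d / p) - y ^ (d / p)) :
    ¬(p : ℤ) ^ 2 ∣ cyclotomicForm d (x : ℤ) y := by
  intro hsq
  have := Fact.mk hp
  obtain ⟨t, rfl⟩ := hpd
  rw [Nat.mul_div_cancel_left _ hp.pos] at h
  have ht0 : t ≠ 0 := right_ne_zero_of_mul hd
  have hlt {k : ℕ} (hk : k ≠ 0) : y ^ k < x ^ k := Nat.pow_lt_pow_left hyx hk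
  have ht : t ∈ (p * t).properDivisors := Nat.mem_properDivisors.mpr
    ⟨dvd_mul_left t p, lt_mul_of_one_lt_left (Nat.pos_of_ne_zero ht0) hp.one_lt⟩
  have hpx : ¬p ∣ x ^ t := fun hpxt ↦
    (not_dvd_of_prime_dvd_pow_sub_pow hp hxy hyx.le ht0 h).1 (hp.dvd_of_dvd_pow hpxt)
  have hval := padicValNat.pow_sub_pow hpodd (hlt ht0) h hpx hp.ne_zero
  rw [← pow_mul, ← pow_mul, mul_comm t p, padicValNat_self] at hval
  have hdvd : p ^ (padicValNat p (x ^ t - y ^ t) + 2) ∣ x ^ (p * t) - y ^ (p * t) := by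
    have hmul := (mul_dvd_mul_left ((x : ℤ) ^ t - y ^ t) hsq).trans
      (pow_sub_pow_mul_cyclotomicForm_dvd ht _ _)
    rw [pow_add]
    refine (mul_dvd_mul_right pow_padicValNat_dvd _).trans ?_
    zify [(hlt ht0).le, (hlt hd).le]
    exact hmul
  rw [padicValNat_dvd_iff_le (Nat.sub_ne_zero_of_lt (hlt hd)), hval] at hdvd
  omega

lemma two_pow_totient_le_cyclotomicForm (d : ℕ) (hy : 0 < y) (hyx : y + 2 ≤ x) :
    (2 : ℤ) ^ d.totient ≤ cyclotomicForm d (x : ℤ) y := by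
  have hyx' : (y : ℝ) + 2 ≤ x := by exact_mod_cast hyx
  have hform : ((cyclotomicForm d (x : ℤ) y : ℤ) : ℝ) = cyclotomicForm d (x : ℝ) y := by
    simpa using map_cyclotomicForm (Int.castRingHom ℝ) d x y
  suffices (2 : ℝ) ^ d.totient ≤ cyclotomicForm d (x : ℝ) y by exact_mod_cast hform ▸ this
  calc (2 : ℝ) ^ d.totient ≤ (x - y : ℝ) ^ d.totient := by gcongr; linarith
    _ ≤ cyclotomicForm d (x : ℝ) y :=
      sub_pow_totient_le_cyclotomicForm d (by exact_mod_cast hy) (by linarith)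

lemma lt_two_pow_sub_one {n : ℕ} (hn : 2 < n) : n < 2 ^ (n - 1) := by
  obtain ⟨k, rfl⟩ := Nat.exists_eq_add_of_lt hn
  have : k + 1 < 2 ^ (k + 1) := Nat.lt_two_pow_self
  rw [show 2 + k + 1 - 1 = k + 1 + 1 by omega, pow_succ]
  omega

theorem exists_isPrimitivePrime_of_odd (hd : Odd d) (hxy : x.Coprime y) (hy : 0 < y)
    (hyx : y + 2 ≤ x) : ∃ p, IsPrimitivePrime x y d p := by
  by_contra! hnone
  have hd0 : d ≠ 0 := hd.pos.ne'
  have hlarge := two_pow_totient_le_cyclotomicForm d hy hyx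
  obtain ⟨f, hf⟩ := Int.eq_ofNat_of_zero_le ((by positivity : (0 : ℤ) ≤ 2 ^ d.totient).trans hlarge)
  replace hlarge : 2 ^ d.totient ≤ f := by rw [hf] at hlarge; exact_mod_cast hlarge
  have hf1 : 1 < f := (Nat.one_lt_two_pow (Nat.totient_pos.mpr hd.pos).ne').trans_le hlarge
  have hnonprim {r : ℕ} (hr : r.Prime) (hrf : r ∣ f) :=
    dvd_and_dvd_of_not_isPrimitivePrime hr hxy (by omega) hd0 (hf ▸ Int.natCast_dvd_natCast.mpr hrf)
      (hnone r)
  obtain ⟨p, hp, hpf⟩ := Nat.exists_prime_and_dvd hf1.ne'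
  obtain ⟨hpd, hdvd, hmax⟩ := hnonprim hp hpf
  have hunique {r : ℕ} (hr : r.Prime) (hrf : r ∣ f) : r = p :=
    let ⟨hrd, _, hrmax⟩ := hnonprim hr hrf
    (hmax r hr hrd).antisymm (hrmax p hp hpd)
  have hfp := Nat.eq_prime_pow_of_unique_prime_dvd (by omega) hunique
  have hpodd : Odd p := hd.of_dvd_nat hpd
  have hexp : f.primeFactorsList.length ≤ 1 := by
    by_contra! hlen
    apply not_sq_dvd_cyclotomicForm hp hpodd hxy (by omega) hd0 hpd hdvd
    rw [hf, hfp]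
    exact_mod_cast pow_dvd_pow p hlen
  have hp2 : 2 < p := hp.two_le.lt_of_ne' fun h ↦ absurd (h ▸ hpodd) (by decide)
  have hpφ : p - 1 ≤ d.totient := Nat.totient_prime hp ▸
    Nat.le_of_dvd (Nat.totient_pos.mpr hd.pos) (Nat.totient_dvd_of_dvd hpd)
  refine lt_irrefl f ?_
  calc f ≤ p := by simpa [← hfp] using Nat.pow_le_pow_right hp.pos hexp
    _ < 2 ^ (p - 1) := lt_two_pow_sub_one hp2
    _ ≤ 2 ^ d.totient := Nat.pow_le_pow_right two_pos hpφ
    _ ≤ f := hlarge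

end CyclotomicForm

section Totient

open Finset

variable {a b M N k p q : ℕ}

lemma totient_mul_of_dvd (h : a ∣ b) : (a * b).totient = a * b.totient := by
  obtain rfl | ha := Nat.eq_zero_or_pos a
  · simp
  have hgcd := Nat.totient_gcd_mul_totient_mul a b
  rw [Nat.gcd_eq_left h, mul_assoc, mul_comm b.totient] at hgcd
  exact Nat.eq_of_mul_eq_mul_left (Nat.totient_pos.mpr ha) hgcd

lemma pow_mul_totient_dvd_totient (a b k : ℕ) :
    a ^ k * b.totient ∣ (a ^ (k + 1) * b).totient := by
  induction k with
  | zero => simpa using Nat.totient_dvd_of_dvd (dvd_mul_left b a)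
  | succ k ih =>
    have ha : a ∣ a ^ (k + 1) * b := (dvd_pow_self a k.succ_ne_zero).mul_right b
    rw [pow_succ' a (k + 1), mul_assoc, totient_mul_of_dvd ha]
    simpa only [pow_succ', mul_assoc] using mul_dvd_mul_left a ih

lemma two_pow_dvd_totient (hM : 2 * M.totient < M) (hk : 2 ^ k ∣ M) : 2 ^ k ∣ M.totient := by
  obtain ⟨e, r, hr, rfl⟩ := Nat.exists_eq_two_pow_mul_odd hM.ne_bot
  have hodd {i : ℕ} : Nat.Coprime (2 ^ i) r := (Nat.coprime_two_left.mpr hr).pow_left i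
  refine (hodd.dvd_of_dvd_mul_right hk).trans ?_
  rw [Nat.totient_mul hodd] at hM ⊢
  cases e with
  | zero => simp
  | succ e =>
    rw [Nat.totient_prime_pow_succ Nat.prime_two, Nat.add_one_sub_one, mul_one] at hM ⊢
    have hr2 : 2 < r := by
      by_contra! hle
      obtain rfl : r = 1 := by have := Nat.odd_iff.mp hr; omega
      rw [Nat.totient_one, pow_succ] at hM
      omega
    exact pow_succ 2 e ▸ mul_dvd_mul_left _ (Nat.totient_even hr2).two_dvd

/-- The prime factors of `N` congruent to `1` modulo `q`: those whose Euler factor `p - 1` makes `q`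
divide `φ(N)`. -/
def primeFactorsOneMod (N q : ℕ) : Finset ℕ :=
  {p ∈ N.primeFactors | q ∣ p - 1}

lemma mem_primeFactorsOneMod :
    p ∈ primeFactorsOneMod N q ↔ p ∈ N.primeFactors ∧ q ∣ p - 1 :=
  mem_filter

lemma pow_card_primeFactorsOneMod_dvd_totient (N q : ℕ) :
    q ^ #(primeFactorsOneMod N q) ∣ N.totient :=
  calc q ^ #(primeFactorsOneMod N q) = ∏ _p ∈ primeFactorsOneMod N q, q := (prod_const q).symm
    _ ∣ ∏ p ∈ primeFactorsOneMod N q, (p - 1) :=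
      prod_dvd_prod_of_dvd _ _ fun _ hp ↦ (mem_primeFactorsOneMod.mp hp).2
    _ ∣ ∏ p ∈ N.primeFactors, (p - 1) := prod_dvd_prod_of_subset _ _ _ (filter_subset _ _)
    _ ∣ N.totient := Nat.totient_eq_div_primeFactors_mul N ▸ dvd_mul_left _ _

end Totient

section EulerFactors

open Finset

variable {p : ℕ}

/-- The logarithm of the Euler factor `(1 - 1 / p)⁻¹`, so that `log (N / φ(N))` is its sum over the
primes dividing `N`. -/
noncomputable def logEulerFactor (p : ℕ) : ℝ :=
  -Real.log (1 - (p : ℝ)⁻¹)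

lemma logEulerFactor_nonneg (p : ℕ) : 0 ≤ logEulerFactor p :=
  neg_nonneg.mpr <| Real.log_nonpos (sub_nonneg.mpr p.cast_inv_le_one) (by simp)

lemma logEulerFactor_two : logEulerFactor 2 = Real.log 2 := by
  rw [logEulerFactor, ← Real.log_inv]
  norm_num

lemma one_sub_inv_pos (hp : 1 < p) : (0 : ℝ) < 1 - (p : ℝ)⁻¹ :=
  sub_pos.mpr (inv_lt_one_of_one_lt₀ (by exact_mod_cast hp))

lemma logEulerFactor_le_inv_sub_one (hp : 1 < p) : logEulerFactor p ≤ ((p : ℝ) - 1)⁻¹ := by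
  have hpos := one_sub_inv_pos hp
  have hp1 : (0 : ℝ) < p - 1 := sub_pos.mpr (by exact_mod_cast hp)
  have : (0 : ℝ) < p := by linarith
  have hinv : (1 - (p : ℝ)⁻¹)⁻¹ = 1 + ((p : ℝ) - 1)⁻¹ := by field_simp; ring
  have := Real.one_sub_inv_le_log_of_pos hpos
  rw [logEulerFactor]
  linarith

lemma sum_logEulerFactor_primeFactors {N : ℕ} (hN : N ≠ 0) :
    ∑ p ∈ N.primeFactors, logEulerFactor p = Real.log N - Real.log N.totient := by
  have hne : ∀ p ∈ N.primeFactors, 1 - (p : ℝ)⁻¹ ≠ 0 := fun p hp ↦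
    (one_sub_inv_pos (Nat.prime_of_mem_primeFactors hp).one_lt).ne'
  have htotient : (N.totient : ℝ) = N * ∏ p ∈ N.primeFactors, (1 - (p : ℝ)⁻¹) := by
    simpa using congrArg (Rat.cast (K := ℝ)) N.totient_eq_mul_prod_factors
  rw [htotient, Real.log_mul (by exact_mod_cast hN) (prod_ne_zero_iff.mpr hne), Real.log_prod hne]
  simp only [logEulerFactor, sum_neg_distrib]
  ring

lemma sum_log_primeFactors_le {N : ℕ} (hN : N ≠ 0) :
    ∑ p ∈ N.primeFactors, Real.log p ≤ Real.log N := by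
  have hpos : ∀ p ∈ N.primeFactors, (0 : ℝ) < p := fun p hp ↦ by
    exact_mod_cast (Nat.prime_of_mem_primeFactors hp).pos
  rw [← Real.log_prod fun p hp ↦ (hpos p hp).ne']
  refine Real.log_le_log (prod_pos hpos) ?_
  rw [← Nat.cast_prod, Nat.cast_le]
  exact Nat.le_of_dvd (Nat.pos_of_ne_zero hN) (Nat.prod_primeFactors_dvd N)

lemma three_mul_logEulerFactor_add_log_two_le (hp : 3 ≤ p) :
    3 * logEulerFactor p + Real.log 2 ≤ 2 * Real.log p := by
  have hp3 : (3 : ℝ) ≤ p := by exact_mod_cast hp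
  have hfactor : (2 : ℝ) / 3 ≤ 1 - (p : ℝ)⁻¹ := by
    have := inv_anti₀ three_pos hp3
    norm_num at this ⊢
    linarith
  have hlog : Real.log 2 ≤ Real.log ((p : ℝ) ^ 2 * (1 - (p : ℝ)⁻¹) ^ 3) := by
    refine Real.log_le_log two_pos ?_
    calc (2 : ℝ) ≤ 3 ^ 2 * (2 / 3) ^ 3 := by norm_num
      _ ≤ (p : ℝ) ^ 2 * (1 - (p : ℝ)⁻¹) ^ 3 := by gcongr
  rw [Real.log_mul (by positivity) (by positivity), Real.log_pow, Real.log_pow] at hlog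
  push_cast at hlog
  rw [logEulerFactor]
  linarith

lemma three_mul_log_two_le_two_mul_log_three : 3 * Real.log 2 ≤ 2 * Real.log 3 := by
  have := Real.log_le_log (by norm_num) (by norm_num : (2 : ℝ) ^ 3 ≤ 3 ^ 2)
  simpa only [Real.log_pow, Nat.cast_ofNat] using this

-- Every odd prime has room `log 2` to spare, which pays for the prime `2`. If `2` is the only prime
-- factor, the `+ 1` is needed: `8 ≤ 9`.
lemma three_mul_sum_logEulerFactor_le_of_even {N : ℕ} (hN : N ≠ 0) (heven : Even N) :
    3 * ∑ p ∈ N.primeFactors, logEulerFactor p ≤ 2 * Real.log (N + 1) := by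
  have h2 : 2 ∈ N.primeFactors := Nat.mem_primeFactors.mpr ⟨Nat.prime_two, heven.two_dvd, hN⟩
  have hN2 : (2 : ℝ) ≤ N := by exact_mod_cast Nat.le_of_dvd (Nat.pos_of_ne_zero hN) heven.two_dvd
  have hlog := sum_log_primeFactors_le hN
  have hlogN : Real.log N ≤ Real.log (N + 1) := Real.log_le_log (by linarith) (by linarith)
  rw [← add_sum_erase _ _ h2, Nat.cast_two] at hlog
  rw [← add_sum_erase _ _ h2, logEulerFactor_two]
  obtain hempty | hne := (N.primeFactors.erase 2).eq_empty_or_nonempty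
  · rw [hempty, sum_empty, add_zero]
    have : Real.log 3 ≤ Real.log (N + 1) := Real.log_le_log three_pos (by linarith)
    linarith [three_mul_log_two_le_two_mul_log_three]
  · have hodd : ∀ p ∈ N.primeFactors.erase 2, 3 * logEulerFactor p + Real.log 2 ≤ 2 * Real.log p :=
      fun p hp ↦ three_mul_logEulerFactor_add_log_two_le <|
        (Nat.prime_of_mem_primeFactors (mem_of_mem_erase hp)).two_le.lt_of_ne' (ne_of_mem_erase hp)
    have hsum := sum_le_sum hodd
    rw [sum_add_distrib, sum_const, nsmul_eq_mul, ← mul_sum, ← mul_sum] at hsum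
    have hcard : (1 : ℝ) ≤ #(N.primeFactors.erase 2) := by exact_mod_cast hne.card_pos
    have := le_mul_of_one_le_left (Real.log_pos one_lt_two).le hcard
    linarith

lemma sum_inv_le_log (J : Finset ℕ) (hJ : ∀ j ∈ J, 0 < j) :
    ∑ j ∈ J, (j : ℝ)⁻¹ ≤ Real.log (2 * #J + 1) := by
  induction J using Finset.induction_on_max with
  | empty => simp
  | insert a s hmax ih =>
    have ha : a ∉ s := fun h ↦ lt_irrefl _ (hmax a h)
    obtain ⟨ha0, hs⟩ := forall_mem_insert _ _ _ |>.mp hJ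
    have hcard : #s + 1 ≤ a := by
      have hsub : s ⊆ Ico 1 a := fun j hj ↦ mem_Ico.mpr ⟨hs j hj, hmax j hj⟩
      have := card_le_card hsub
      rw [Nat.card_Ico] at this
      omega
    have hinv : (a : ℝ)⁻¹ ≤ (#s + 1 : ℝ)⁻¹ := inv_anti₀ (by positivity) (by exact_mod_cast hcard)
    have hlog := Real.le_log_one_add_of_nonneg (x := 2 / (2 * #s + 1 : ℝ)) (by positivity)
    rw [show 2 * (2 / (2 * #s + 1 : ℝ)) / (2 / (2 * #s + 1) + 2) = (#s + 1 : ℝ)⁻¹ by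
        field_simp; ring,
      show 1 + 2 / (2 * #s + 1 : ℝ) = (2 * (#s + 1) + 1) / (2 * #s + 1) by field_simp; ring,
      Real.log_div (by positivity) (by positivity)] at hlog
    rw [sum_insert ha, card_insert_of_notMem ha]
    push_cast
    linarith [ih hs]

lemma sum_logEulerFactor_le_of_dvd_sub_one {P : Finset ℕ} {D : ℕ} (hD : 0 < D)
    (hP : ∀ p ∈ P, 1 < p ∧ D ∣ p - 1) :
    ∑ p ∈ P, logEulerFactor p ≤ Real.log (2 * #P + 1) / D := by
  have hinj : Set.InjOn (fun p ↦ (p - 1) / D) P := fun p hp r hr hpr ↦ by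
    have := (Nat.div_left_inj (hP p hp).2 (hP r hr).2).mp hpr
    have := (hP p hp).1
    have := (hP r hr).1
    omega
  have hterm : ∀ p ∈ P, logEulerFactor p ≤ (((p - 1) / D : ℕ) : ℝ)⁻¹ / D := fun p hp ↦ by
    obtain ⟨hp1, hDp⟩ := hP p hp
    have hD0 : (D : ℝ) ≠ 0 := by exact_mod_cast hD.ne'
    rw [Nat.cast_div hDp hD0, Nat.cast_pred (by omega), inv_div, div_div_cancel_left' hD0]
    exact logEulerFactor_le_inv_sub_one hp1
  calc ∑ p ∈ P, logEulerFactor p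
      ≤ (∑ j ∈ P.image (fun p ↦ (p - 1) / D), (j : ℝ)⁻¹) / D := by
        rw [sum_image hinj, sum_div]
        exact sum_le_sum hterm
    _ ≤ Real.log (2 * #P + 1) / D := by
        rw [← card_image_of_injOn hinj]
        gcongr
        refine sum_inv_le_log _ (forall_mem_image.mpr fun p hp ↦ ?_)
        obtain ⟨hp1, hDp⟩ := hP p hp
        exact Nat.div_pos (Nat.le_of_dvd (by omega) hDp) hD

lemma sum_logEulerFactor_primeFactorsOneMod_le (N : ℕ) {q : ℕ} (hq : Odd q) (hq1 : q ≠ 1) :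
    ∑ p ∈ primeFactorsOneMod N q, logEulerFactor p ≤
      Real.log (2 * #(primeFactorsOneMod N q) + 1) / (2 * q) := by
  have hdvd : ∀ p ∈ primeFactorsOneMod N q, 1 < p ∧ 2 * q ∣ p - 1 := fun p hp ↦ by
    obtain ⟨hpN, hqp⟩ := mem_primeFactorsOneMod.mp hp
    have hpp := Nat.prime_of_mem_primeFactors hpN
    have hp2 : p ≠ 2 := by
      rintro rfl
      exact hq1 (Nat.dvd_one.mp hqp)
    exact ⟨hpp.one_lt, (Nat.coprime_two_left.mpr hq).mul_dvd_of_dvd_of_dvd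
      (hpp.even_sub_one hp2).two_dvd hqp⟩
  exact_mod_cast sum_logEulerFactor_le_of_dvd_sub_one (mul_pos two_pos hq.pos) hdvd

end EulerFactors

section Numerics

lemma pow_le_pow_swap {a b : ℕ} (ha : 3 ≤ a) (hab : a ≤ b) : b ^ a ≤ a ^ b := by
  have ha' : Real.exp 1 ≤ a :=
    (Real.exp_one_lt_d9.le.trans (by norm_num)).trans (Nat.ofNat_le_cast.mpr ha)
  have hab' : (a : ℝ) ≤ b := by exact_mod_cast hab
  have ha0 : (0 : ℝ) < a := (Real.exp_pos 1).trans_le ha'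
  have hlog := Real.log_div_self_antitoneOn ha' (ha'.trans hab') hab'
  rw [div_le_div_iff₀ (ha0.trans_le hab') ha0, mul_comm, mul_comm (Real.log a), ← Real.log_pow,
    ← Real.log_pow] at hlog
  exact_mod_cast (Real.log_le_log_iff (by have := ha0.trans_le hab'; positivity)
    (by positivity)).mp hlog

lemma two_pow_add_one_pow_three_le {s : ℕ} (hs : 5 ≤ s) : (2 ^ s + 1) ^ 3 ≤ 9 ^ s := by
  induction s, hs using Nat.le_induction with
  | base => norm_num
  | succ k _ ih =>
    calc (2 ^ (k + 1) + 1) ^ 3 ≤ (2 * (2 ^ k + 1)) ^ 3 := by gcongr; omega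
      _ = 8 * (2 ^ k + 1) ^ 3 := by ring
      _ ≤ 9 * 9 ^ k := by gcongr; norm_num
      _ = 9 ^ (k + 1) := (pow_succ' 9 k).symm

lemma mul_self_le_two_pow {s : ℕ} (hs : 4 ≤ s) : s * s ≤ 2 ^ s := by
  induction s, hs using Nat.le_induction with
  | base => norm_num
  | succ k hk ih => rw [pow_succ 2 k]; nlinarith

lemma two_pow_add_one_pow_le (s : ℕ) : (2 ^ s + 1) ^ (3 * s) ≤ 9 ^ (2 ^ s + 1) := by
  obtain hs | hs := Nat.lt_or_ge s 5
  · interval_cases s <;> norm_num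
  calc (2 ^ s + 1) ^ (3 * s) = ((2 ^ s + 1) ^ 3) ^ s := pow_mul ..
    _ ≤ (9 ^ s) ^ s := Nat.pow_le_pow_left (two_pow_add_one_pow_three_le hs) s
    _ = 9 ^ (s * s) := (pow_mul ..).symm
    _ ≤ 9 ^ (2 ^ s + 1) := Nat.pow_le_pow_right (by norm_num)
      ((mul_self_le_two_pow (by omega)).trans (Nat.le_succ _))

lemma pow_three_mul_le_nine_pow {s T : ℕ} (hT : 2 ^ s + 1 ≤ T) : T ^ (3 * s) ≤ 9 ^ T := by
  obtain rfl | hs := Nat.eq_zero_or_pos s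
  · simpa using Nat.one_le_pow T 9 (by norm_num)
  have hbase : 3 ≤ 2 ^ s + 1 := by
    have := Nat.one_lt_two_pow hs.ne'
    omega
  refine (Nat.pow_le_pow_iff_left (Nat.succ_ne_zero (2 ^ s))).mp ?_
  calc (T ^ (3 * s)) ^ (2 ^ s + 1) = (T ^ (2 ^ s + 1)) ^ (3 * s) := pow_right_comm ..
    _ ≤ ((2 ^ s + 1) ^ T) ^ (3 * s) := Nat.pow_le_pow_left (pow_le_pow_swap hbase hT) _
    _ = ((2 ^ s + 1) ^ (3 * s)) ^ T := pow_right_comm ..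
    _ ≤ (9 ^ (2 ^ s + 1)) ^ T := Nat.pow_le_pow_left (two_pow_add_one_pow_le s) T
    _ = (9 ^ T) ^ (2 ^ s + 1) := pow_right_comm ..

lemma two_mul_add_one_pow_le {s K q X : ℕ} (hs : 2 ^ s ≤ 2 * K) (hq : 3 ≤ q) (hX : 3 ≤ X)
    (h : q ^ (2 * K) ≤ X ^ (q - 1)) : (2 * K + 1) ^ (3 * s) ≤ X ^ (2 * q) := by
  have hthree : 3 ^ (2 * K + 1) ≤ X ^ q :=
    calc 3 ^ (2 * K + 1) = 3 ^ (2 * K) * 3 := pow_succ ..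
      _ ≤ q ^ (2 * K) * X := by gcongr
      _ ≤ X ^ (q - 1) * X := by gcongr
      _ = X ^ q := pow_sub_one_mul (by omega) X
  calc (2 * K + 1) ^ (3 * s) ≤ 9 ^ (2 * K + 1) := pow_three_mul_le_nine_pow (by omega)
    _ = (3 ^ (2 * K + 1)) ^ 2 := by rw [pow_right_comm]; norm_num
    _ ≤ (X ^ q) ^ 2 := by gcongr
    _ = X ^ (2 * q) := by rw [← pow_mul, mul_comm]

end Numerics

section SumUnion

open Finset

variable {ι α : Type*} [DecidableEq α] {f : α → ℝ}

lemma sum_union_le_sum_add_sum (hf : ∀ a, 0 ≤ f a) (s t : Finset α) :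
    ∑ a ∈ s ∪ t, f a ≤ ∑ a ∈ s, f a + ∑ a ∈ t, f a := by
  rw [← sum_union_inter]
  exact le_add_of_nonneg_right (sum_nonneg fun a _ ↦ hf a)

lemma sum_biUnion_le_sum_sum (hf : ∀ a, 0 ≤ f a) (s : Finset ι) (t : ι → Finset α) :
    ∑ a ∈ s.biUnion t, f a ≤ ∑ i ∈ s, ∑ a ∈ t i, f a := by
  rw [← sup_eq_biUnion]
  exact apply_sup_le_sum (f := fun u : Finset α ↦ ∑ a ∈ u, f a) sum_empty
    (sum_union_le_sum_add_sum hf _ _) s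

end SumUnion

section TotientDvd

open Finset

variable {x y m n p q : ℕ}

lemma pow_mul_pow_sub_pow_lt {c : ℕ} (hy : 0 < y) (hyx : y < x) (hc : c ≠ 0) (n : ℕ) :
    x ^ c * (x ^ n - y ^ n) < x ^ (c + n) - y ^ (c + n) := by
  have hlt : y ^ c * y ^ n < x ^ c * y ^ n :=
    Nat.mul_lt_mul_of_pos_right (Nat.pow_lt_pow_left hyx hc) (pow_pos hy n)
  have hle : x ^ c * y ^ n ≤ x ^ c * x ^ n :=
    Nat.mul_le_mul_left _ (Nat.pow_le_pow_left hyx.le n)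
  rw [Nat.mul_sub, pow_add, pow_add]
  omega

lemma two_lt_pow_sub_pow (hy : 0 < y) (hyx : y < x) (hm : 1 < m) : 2 < x ^ m - y ^ m := by
  have hlt := pow_mul_pow_sub_pow_lt hy hyx (Nat.sub_ne_zero_of_lt hm) 1
  rw [pow_one, pow_one, Nat.sub_add_cancel hm.le] at hlt
  calc 2 ≤ x := by omega
    _ ≤ x ^ (m - 1) := Nat.le_self_pow (Nat.sub_ne_zero_of_lt hm) x
    _ ≤ x ^ (m - 1) * (x - y) := Nat.le_mul_of_pos_right _ (Nat.sub_pos_of_lt hyx)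
    _ < x ^ m - y ^ m := hlt

lemma mul_totient_lt_of_totient_dvd (hy : 0 < y) (hyx : y < x) (hn : n ≠ 0) (hnm : n < m)
    (h : (x ^ m - y ^ m).totient ∣ x ^ n - y ^ n) :
    x * (x ^ m - y ^ m).totient < x ^ m - y ^ m := by
  have hpos : 0 < x ^ n - y ^ n := Nat.sub_pos_of_lt (Nat.pow_lt_pow_left hyx hn)
  calc x * (x ^ m - y ^ m).totient ≤ x ^ (m - n) * (x ^ n - y ^ n) :=
        Nat.mul_le_mul (Nat.le_self_pow (Nat.sub_ne_zero_of_lt hnm) x) (Nat.le_of_dvd hpos h)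
    _ < x ^ (m - n + n) - y ^ (m - n + n) :=
        pow_mul_pow_sub_pow_lt hy hyx (Nat.sub_ne_zero_of_lt hnm) n
    _ = x ^ m - y ^ m := by rw [Nat.sub_add_cancel hnm.le]

lemma odd_and_odd_of_even_pow_sub_pow (hxy : x.Coprime y) (hyx : y ≤ x) (hn : n ≠ 0)
    (h : Even (x ^ n - y ^ n)) : Odd x ∧ Odd y := by
  simpa only [← even_iff_two_dvd, Nat.not_even_iff_odd] using
    not_dvd_of_prime_dvd_pow_sub_pow Nat.prime_two hxy hyx hn h.two_dvd

-- For even `m`, any power `2 ^ k ∣ x ^ m - y ^ m` would divide `φ(x ^ m - y ^ m)`, hence `x - y`,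
-- so that `2 ^ (k + 1)` divides `x ^ 2 - y ^ 2`, and the descent never stops.
lemma odd_of_totient_dvd (hx : Odd x) (hy : Odd y) (hyx : y < x) (hmn : m.Coprime n)
    (hlt : 2 * (x ^ m - y ^ m).totient < x ^ m - y ^ m)
    (h : (x ^ m - y ^ m).totient ∣ x ^ n - y ^ n) : Odd m := by
  by_contra! hm
  rw [Nat.not_odd_iff_even] at hm
  have hn2 : ¬2 ∣ n := fun hn ↦ Nat.not_coprime_of_dvd_of_dvd one_lt_two hm.two_dvd hn hmn
  have hsq : (x + y) * (x - y) ∣ x ^ m - y ^ m := by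
    rw [← Nat.sq_sub_sq]
    obtain ⟨k, rfl⟩ := hm.two_dvd
    simpa only [pow_mul] using Nat.sub_dvd_pow_sub_pow (x ^ 2) (y ^ 2) k
  have hall (k : ℕ) : 2 ^ k ∣ x ^ m - y ^ m := by
    induction k with
    | zero => simp
    | succ k ih =>
      have hxy : 2 ^ k ∣ x - y :=
        prime_pow_dvd_sub_of_dvd_pow_sub_pow Nat.prime_two hyx.le hx.not_two_dvd_nat hn2
          (Nat.Odd.sub_odd hx hy).two_dvd ((two_pow_dvd_totient hlt ih).trans h)
      rw [pow_succ']
      exact (mul_dvd_mul (hx.add_odd hy).two_dvd hxy).trans hsq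
  exact Nat.lt_two_pow_self.not_ge (Nat.le_of_dvd hlt.pos (hall _))

lemma prime_pow_lt_of_dvd_sq_sub_sq {a b k : ℕ} (hq : q.Prime) (hq2 : q ≠ 2) (hb : b < a)
    (ha_odd : Odd a) (hb_odd : Odd b) (hqa : ¬q ∣ a) (h : q ^ k ∣ a ^ 2 - b ^ 2) : q ^ k < a := by
  rw [Nat.sq_sub_sq] at h
  have hcop {z : ℕ} (hz : ¬q ∣ z) : (q ^ k).Coprime z :=
    (hq.coprime_iff_not_dvd.mpr hz).pow_left k
  have h2 : ¬q ∣ 2 := fun hdvd ↦ hq2 ((Nat.prime_dvd_prime_iff_eq hq Nat.prime_two).mp hdvd)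
  by_cases hadd : q ∣ a + b
  · have hsub : ¬q ∣ a - b := fun hsub ↦ by
      have h2a := dvd_add hadd hsub
      rw [show a + b + (a - b) = 2 * a by omega] at h2a
      exact (hq.dvd_mul.mp h2a).elim h2 hqa
    have hmul : q ^ k * 2 ∣ a + b := (hcop h2).mul_dvd_of_dvd_of_dvd
      ((hcop hsub).dvd_of_dvd_mul_right h) (ha_odd.add_odd hb_odd).two_dvd
    have := Nat.le_of_dvd (by omega) hmul
    omega
  · have := Nat.le_of_dvd (by omega) ((hcop hadd).dvd_of_dvd_mul_left h)
    have := hb_odd.pos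
    omega

lemma prime_pow_two_mul_le_of_dvd {k : ℕ} (hq : q.Prime) (hq2 : q ≠ 2) (hyx : y < x)
    (hx : Odd x) (hy : Odd y) (hqx : ¬q ∣ x) (h : q ^ k ∣ x ^ (q - 1) - y ^ (q - 1)) :
    q ^ (2 * k) ≤ x ^ (q - 1) := by
  obtain ⟨j, hj⟩ := (hq.even_sub_one hq2).two_dvd
  have hj0 : j ≠ 0 := by
    have := hq.two_le
    omega
  rw [hj, mul_comm 2 j, pow_mul, pow_mul] at h
  have hlt : q ^ k < x ^ j := prime_pow_lt_of_dvd_sq_sub_sq hq hq2 (Nat.pow_lt_pow_left hyx hj0)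
    hx.pow hy.pow (fun hdvd ↦ hqx (hq.dvd_of_dvd_pow hdvd)) h
  rw [hj, mul_comm 2 k, mul_comm 2 j, pow_mul, pow_mul]
  exact Nat.pow_le_pow_left hlt.le 2

-- Each divisor `∏ r ∈ T, r` of `m` with `q ∈ T ⊆ m.primeFactors` has its own primitive prime.
lemma two_pow_card_primeFactors_le (hxy : x.Coprime y) (hy : 0 < y) (hyx : y + 2 ≤ x)
    (hm : Odd m) (hq : q ∈ m.primeFactors) :
    2 ^ #m.primeFactors ≤ 2 * #(primeFactorsOneMod (x ^ m - y ^ m) q) := by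
  have hmem {T : Finset ℕ} : T ∈ Icc {q} m.primeFactors ↔ q ∈ T ∧ T ⊆ m.primeFactors := by
    rw [Finset.mem_Icc]; exact and_congr_left' singleton_subset_iff
  have hdvd {T : Finset ℕ} (hT : T ∈ Icc {q} m.primeFactors) : ∏ r ∈ T, r ∣ m :=
    (prod_dvd_prod_of_subset _ _ _ (hmem.mp hT).2).trans (Nat.prod_primeFactors_dvd m)
  have hprim (T : Finset ℕ) (hT : T ∈ Icc {q} m.primeFactors) :
      ∃ p, IsPrimitivePrime x y (∏ r ∈ T, r) p :=
    exists_isPrimitivePrime_of_odd (hm.of_dvd_nat (hdvd hT)) hxy hy hyx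
  choose! f hf using hprim
  have hN : x ^ m - y ^ m ≠ 0 := Nat.sub_ne_zero_of_lt (Nat.pow_lt_pow_left (by omega) hm.pos.ne')
  have hmaps : Set.MapsTo f (Icc {q} m.primeFactors) (primeFactorsOneMod (x ^ m - y ^ m) q) :=
    fun T hT ↦ mem_primeFactorsOneMod.mpr
      ⟨Nat.mem_primeFactors.mpr ⟨(hf T hT).1, ((hf T hT).2 m).mpr (hdvd hT), hN⟩,
        (dvd_prod_of_mem _ (hmem.mp hT).1).trans <| (hf T hT).dvd_sub_one hxy (by omega)
          (ne_zero_of_dvd_ne_zero hm.pos.ne' (hdvd hT))⟩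
  have hinj : Set.InjOn f (Icc {q} m.primeFactors) := fun T hT U hU hTU ↦ by
    have hprod := (hf T hT).unique (hTU ▸ hf U hU)
    have hprime {V : Finset ℕ} (hV : V ∈ Icc {q} m.primeFactors) : ∀ r ∈ V, r.Prime :=
      fun r hr ↦ Nat.prime_of_mem_primeFactors ((hmem.mp hV).2 hr)
    rw [← Nat.primeFactors_prod (hprime hT), ← Nat.primeFactors_prod (hprime hU), hprod]
  have hcard := card_le_card_of_injOn f hmaps hinj
  rw [card_Icc_finset (singleton_subset_iff.mpr hq), card_singleton] at hcard
  rw [← mul_pow_sub_one (card_ne_zero_of_mem hq)]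
  exact Nat.mul_le_mul_left 2 hcard

lemma prime_pow_card_primeFactorsOneMod_dvd (hyx : y < x) (hmn : m.Coprime n)
    (h : (x ^ m - y ^ m).totient ∣ x ^ n - y ^ n) (hq : q ∈ m.primeFactors)
    (hqx : ¬q ∣ x) (hqy : ¬q ∣ y) :
    q ^ #(primeFactorsOneMod (x ^ m - y ^ m) q) ∣ x ^ (q - 1) - y ^ (q - 1) := by
  have hqp := Nat.prime_of_mem_primeFactors hq
  have hqn : ¬q ∣ n := fun hqn ↦
    Nat.not_coprime_of_dvd_of_dvd hqp.one_lt (Nat.dvd_of_mem_primeFactors hq) hqn hmn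
  refine prime_pow_dvd_sub_of_dvd_pow_sub_pow hqp (Nat.pow_le_pow_left hyx.le _)
    (fun hdvd ↦ hqx (hqp.dvd_of_dvd_pow hdvd)) hqn
    (prime_dvd_pow_sub_one_sub_pow_sub_one hqp hyx.le hqx hqy) ?_
  rw [pow_right_comm x, pow_right_comm y]
  exact ((pow_card_primeFactorsOneMod_dvd_totient _ q).trans h).trans
    (Nat.sub_dvd_pow_sub_pow _ _ _)

lemma primeFactors_pow_sub_pow_subset (hxy : x.Coprime y) (hyx : y < x) :
    (x ^ m - y ^ m).primeFactors ⊆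
      (x - y).primeFactors ∪ m.primeFactors.biUnion (primeFactorsOneMod (x ^ m - y ^ m)) := by
  obtain rfl | hm := eq_or_ne m 0
  · simp
  intro p hp
  have := Fact.mk (Nat.prime_of_mem_primeFactors hp)
  have hpN := Nat.dvd_of_mem_primeFactors hp
  have hpy := (not_dvd_of_prime_dvd_pow_sub_pow Fact.out hxy hyx.le hm hpN).2
  have hprim := isPrimitivePrime_orderOf hyx.le hpy
  set e := orderOf (x / y : ZMod p)
  have hem : e ∣ m := (hprim.2 m).mp hpN
  rw [mem_union, mem_biUnion]
  obtain he | he := eq_or_ne e 1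
  · left
    have hdvd := (hprim.2 1).mpr he.dvd
    rw [pow_one, pow_one] at hdvd
    exact Nat.mem_primeFactors.mpr ⟨hprim.1, hdvd, Nat.sub_ne_zero_of_lt hyx⟩
  · right
    refine ⟨e.minFac, Nat.mem_primeFactors.mpr
      ⟨Nat.minFac_prime he, (Nat.minFac_dvd e).trans hem, hm⟩, mem_primeFactorsOneMod.mpr ⟨hp, ?_⟩⟩
    exact (Nat.minFac_dvd e).trans
      (hprim.dvd_sub_one hxy hyx.le (ne_zero_of_dvd_ne_zero hm hem))

lemma three_mul_card_mul_sum_logEulerFactor_le (hxy : x.Coprime y) (hx : Odd x) (hy : Odd y)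
    (hyx : y + 2 ≤ x) (hm : Odd m) (hn : n ≠ 0) (hmn : m.Coprime n)
    (h : (x ^ m - y ^ m).totient ∣ x ^ n - y ^ n) (hq : q ∈ m.primeFactors) :
    3 * #m.primeFactors * ∑ p ∈ primeFactorsOneMod (x ^ m - y ^ m) q, logEulerFactor p ≤
      Real.log x := by
  have hyx' : y < x := by omega
  have hqp := Nat.prime_of_mem_primeFactors hq
  have hqodd : Odd q := hm.of_dvd_nat (Nat.dvd_of_mem_primeFactors hq)
  have hq2 : q ≠ 2 := fun h2 ↦ absurd (h2 ▸ hqodd) (by decide)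
  have hq3 : 3 ≤ q := hqp.two_le.lt_of_ne' hq2
  have hlower := two_pow_card_primeFactors_le hxy hy.pos hyx hm hq
  have hsum := sum_logEulerFactor_primeFactorsOneMod_le (x ^ m - y ^ m) hqodd hqp.ne_one
  have hqN := (pow_card_primeFactorsOneMod_dvd_totient (x ^ m - y ^ m) q).trans h
  set K := #(primeFactorsOneMod (x ^ m - y ^ m) q) with hK
  have hK0 : K ≠ 0 := by
    have := Nat.pow_pos (n := #m.primeFactors) two_pos
    omega
  obtain ⟨hqx, hqy⟩ := not_dvd_of_prime_dvd_pow_sub_pow hqp hxy hyx'.le hn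
    ((dvd_pow_self q hK0).trans hqN)
  have hpow : (2 * K + 1) ^ (3 * #m.primeFactors) ≤ x ^ (2 * q) :=
    two_mul_add_one_pow_le hlower hq3 (by have := hy.pos; omega) <|
      prime_pow_two_mul_le_of_dvd hqp hq2 hyx' hx hy hqx
        (prime_pow_card_primeFactorsOneMod_dvd hyx' hmn h hq hqx hqy)
  have hlog : 3 * #m.primeFactors * Real.log (2 * K + 1) ≤ 2 * q * Real.log x := by
    have := Real.log_le_log (by positivity) (Nat.cast_le (α := ℝ).mpr hpow)
    push_cast [Real.log_pow] at this
    exact this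
  have hq0 : (0 : ℝ) < 2 * q := by have := hqp.pos; positivity
  calc 3 * #m.primeFactors * ∑ p ∈ primeFactorsOneMod (x ^ m - y ^ m) q, logEulerFactor p
      ≤ 3 * #m.primeFactors * (Real.log (2 * K + 1) / (2 * q)) := by gcongr
    _ ≤ Real.log x := by
      rw [← mul_div_assoc, div_le_iff₀ hq0, mul_comm (Real.log x)]
      exact hlog

lemma sum_logEulerFactor_pow_sub_pow_le (hxy : x.Coprime y) (hx : Odd x) (hy : Odd y)
    (hyx : y < x) (hm : Odd m) (hm1 : m ≠ 1) (hn : n ≠ 0) (hmn : m.Coprime n)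
    (h : (x ^ m - y ^ m).totient ∣ x ^ n - y ^ n) :
    ∑ p ∈ (x ^ m - y ^ m).primeFactors, logEulerFactor p ≤ Real.log x := by
  have hyx2 : y + 2 ≤ x := by
    obtain ⟨a, rfl⟩ := hx
    obtain ⟨b, rfl⟩ := hy
    omega
  have hleft : 3 * ∑ p ∈ (x - y).primeFactors, logEulerFactor p ≤ 2 * Real.log x := by
    refine (three_mul_sum_logEulerFactor_le_of_even (Nat.sub_ne_zero_of_lt hyx)
      (Nat.Odd.sub_odd hx hy)).trans ?_
    have : ((x - y : ℕ) : ℝ) + 1 ≤ x := by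
      have := hy.pos
      exact_mod_cast (by omega : x - y + 1 ≤ x)
    gcongr
  have hs : (0 : ℝ) < #m.primeFactors := by
    exact_mod_cast card_pos.mpr (Nat.nonempty_primeFactors.mpr (by have := hm.pos; omega))
  have hright : ∑ q ∈ m.primeFactors, ∑ p ∈ primeFactorsOneMod (x ^ m - y ^ m) q,
      logEulerFactor p ≤ Real.log x / 3 := by
    calc _ ≤ #m.primeFactors • (Real.log x / (3 * #m.primeFactors)) :=
          sum_le_card_nsmul _ _ _ fun q hq ↦ (le_div_iff₀' (by positivity)).mpr <|
            three_mul_card_mul_sum_logEulerFactor_le hxy hx hy hyx2 hm hn hmn h hq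
      _ = Real.log x / 3 := by
          rw [nsmul_eq_mul]
          field_simp
  have hcover := (sum_le_sum_of_subset_of_nonneg (primeFactors_pow_sub_pow_subset (m := m) hxy hyx)
    fun p _ _ ↦ logEulerFactor_nonneg p).trans
      (sum_union_le_sum_add_sum logEulerFactor_nonneg _ _)
  have := sum_biUnion_le_sum_sum logEulerFactor_nonneg m.primeFactors
    (primeFactorsOneMod (x ^ m - y ^ m))
  linarith

theorem not_totient_pow_sub_pow_dvd_of_coprime (hxy : x.Coprime y) (hy : 0 < y) (hyx : y < x)
    (hn : n ≠ 0) (hnm : n < m) (hmn : m.Coprime n) :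
    ¬(x ^ m - y ^ m).totient ∣ x ^ n - y ^ n := by
  intro h
  have hm1 : 1 < m := by omega
  have hN : 2 < x ^ m - y ^ m := two_lt_pow_sub_pow hy hyx hm1
  obtain ⟨hx_odd, hy_odd⟩ := odd_and_odd_of_even_pow_sub_pow hxy hyx.le hn
    ((Nat.totient_even hN).trans_dvd h)
  have hlt := mul_totient_lt_of_totient_dvd hy hyx hn hnm h
  have hm_odd : Odd m := odd_of_totient_dvd hx_odd hy_odd hyx hmn
    ((Nat.mul_le_mul_right _ (by omega)).trans_lt hlt) h
  have hsum := sum_logEulerFactor_pow_sub_pow_le hxy hx_odd hy_odd hyx hm_odd hm1.ne' hn hmn h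
  rw [sum_logEulerFactor_primeFactors (by omega)] at hsum
  have hx0 : (x : ℝ) ≠ 0 := by exact_mod_cast (by omega : x ≠ 0)
  have : 0 < (x ^ m - y ^ m).totient := Nat.totient_pos.mpr (by omega)
  have hlog : Real.log (x * (x ^ m - y ^ m).totient) < Real.log ↑(x ^ m - y ^ m) :=
    Real.log_lt_log (by positivity) (by exact_mod_cast hlt)
  rw [Real.log_mul hx0 (by positivity)] at hlog
  linarith

lemma not_totient_pow_sub_pow_dvd_of_coprime_base (hxy : x.Coprime y) (hy : 0 < y)
    (hyx : y < x) (hn : n ≠ 0) (hnm : n < m) : ¬(x ^ m - y ^ m).totient ∣ x ^ n - y ^ n := by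
  obtain ⟨m', n', hmn, hm', hn'⟩ := Nat.exists_coprime m n
  set g := m.gcd n
  rw [hm', hn', mul_comm m', mul_comm n', pow_mul, pow_mul, pow_mul, pow_mul]
  have hg : g ≠ 0 := Nat.gcd_ne_zero_right hn
  refine not_totient_pow_sub_pow_dvd_of_coprime (hxy.pow g g) (pow_pos hy g)
    (Nat.pow_lt_pow_left hyx hg) (left_ne_zero_of_mul (hn' ▸ hn)) ?_ hmn
  rw [hm', hn'] at hnm
  exact Nat.lt_of_mul_lt_mul_right hnm

lemma totient_pow_sub_pow_dvd_of_mul {d : ℕ} (hd : d ≠ 0) (hnm : n < m)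
    (h : ((x * d) ^ m - (y * d) ^ m).totient ∣ (x * d) ^ n - (y * d) ^ n) :
    (x ^ m - y ^ m).totient ∣ x ^ n - y ^ n := by
  have hfactor (k : ℕ) : (x * d) ^ k - (y * d) ^ k = d ^ k * (x ^ k - y ^ k) := by
    rw [mul_pow, mul_pow, ← Nat.sub_mul, mul_comm]
  rw [hfactor, hfactor] at h
  refine Nat.dvd_of_mul_dvd_mul_left (Nat.pow_pos (n := n) (Nat.pos_of_ne_zero hd)) ?_
  calc d ^ n * (x ^ m - y ^ m).totient
      ∣ (d ^ (n + 1) * (x ^ m - y ^ m)).totient := pow_mul_totient_dvd_totient d _ n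
    _ ∣ (d ^ m * (x ^ m - y ^ m)).totient :=
      Nat.totient_dvd_of_dvd (mul_dvd_mul_right (pow_dvd_pow d hnm) _)
    _ ∣ d ^ n * (x ^ n - y ^ n) := h

theorem not_totient_pow_sub_pow_dvd (hy : 0 < y) (hyx : y < x) (hn : n ≠ 0) (hnm : n < m) :
    ¬(x ^ m - y ^ m).totient ∣ x ^ n - y ^ n := by
  obtain ⟨a, b, hab, hx', hy'⟩ := Nat.exists_coprime x y
  set d := x.gcd y
  rw [hx', hy'] at hyx ⊢
  exact mt (totient_pow_sub_pow_dvd_of_mul (Nat.gcd_ne_zero_right hy.ne') hnm) <|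
    not_totient_pow_sub_pow_dvd_of_coprime_base hab (Nat.pos_of_mul_pos_right (hy' ▸ hy))
      (Nat.lt_of_mul_lt_mul_right hyx) hn hnm

lemma totient_pow_sub_pow_lt_of_lt (hy : 0 < y) (hyx : y < x) (hmn : m < n) :
    (x ^ m - y ^ m).totient < x ^ n - y ^ n :=
  calc (x ^ m - y ^ m).totient ≤ x ^ m - y ^ m := Nat.totient_le _
    _ ≤ x ^ (n - m) * (x ^ m - y ^ m) :=
      Nat.le_mul_of_pos_left _ (pow_pos (hy.trans hyx) _)
    _ < x ^ (n - m + m) - y ^ (n - m + m) :=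
      pow_mul_pow_sub_pow_lt hy hyx (Nat.sub_ne_zero_of_lt hmn) m
    _ = x ^ n - y ^ n := by rw [Nat.sub_add_cancel hmn.le]

end TotientDvd

theorem phi_eq_pow_sub_pow (x y m n : ℕ) (hx : 0 < x) (hy : 0 < y)
    (hm : 0 < m) (hn : 0 < n) (hxy : y < x)
    (heq : Nat.totient (x ^ m - y ^ m) = x ^ n - y ^ n) :
    m = 1 ∧ n = 1 ∧ x = y + 1 := by
  obtain hnm | rfl | hmn := lt_trichotomy n m
  · exact absurd heq.dvd (not_totient_pow_sub_pow_dvd hy hxy hn.ne' hnm)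
  · have hle : x ^ n - y ^ n ≤ 1 := by
      by_contra! hlt
      exact (Nat.totient_lt _ hlt).ne heq
    obtain rfl : n = 1 := by
      by_contra! hn1
      have := two_lt_pow_sub_pow hy hxy (show 1 < n by omega)
      omega
    rw [pow_one, pow_one] at hle
    exact ⟨rfl, rfl, by omega⟩
  · exact absurd heq (totient_pow_sub_pow_lt_of_lt hy hxy hmn).ne
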